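/- Let Ω₁ and Ω₂ be two disjoint open convex subsets of ℂⁿ. Then Ω₁ ∪ Ω₂ is a Runge domain: for every holomorphic function f on Ω₁ ∪ Ω₂, every compact set L ⊆ Ω₁ ∪ Ω₂, and every ε > 0, there exists a holomorphic polynomial Q on ℂⁿ such that sup_{z ∈ L} ‖f(z) − Q(z)‖ < ε. -/

import Mathlib

open Set Filter Topology

noncomputable section

/-- Evaluation of a multivariate polynomial as a function on `ℂⁿ = Fin n → ℂ`. -/
def mvEval {n : ℕ} (p : MvPolynomial (Fin n) ℂ) : (Fin n → ℂ) → ℂ :=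
  fun z => MvPolynomial.eval z p

/-- The polynomially convex hull of a set in `ℂⁿ`. -/
def polyHull {n : ℕ} (K : Set (Fin n → ℂ)) : Set (Fin n → ℂ) :=
  {z | ∀ p : MvPolynomial (Fin n) ℂ, ‖mvEval p z‖ ≤ sSup ((fun w => ‖mvEval p w‖) '' K)}

/-- A set in `ℂⁿ` is polynomially convex if it equals its polynomially convex hull. -/
def IsPolyConvex {n : ℕ} (K : Set (Fin n → ℂ)) : Prop := polyHull K = K

/-- The polynomially convex hull of a subset of `ℂ`. -/
def polyHull1 (F : Set ℂ) : Set ℂ :=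
  {z | ∀ p : Polynomial ℂ, ‖p.eval z‖ ≤ sSup ((fun w => ‖p.eval w‖) '' F)}

/-- A subset of `ℂ` is polynomially convex if it equals its polynomially convex hull. -/
def IsPolyConvex1 (F : Set ℂ) : Prop := polyHull1 F = F

/-- Partial derivative in the `i`-th coordinate direction. -/
def pd {n : ℕ} (i : Fin n) (f : (Fin n → ℂ) → ℂ) : (Fin n → ℂ) → ℂ :=
  fun z => fderiv ℂ f z (Pi.single i 1)

/-- Iterated partial derivative `D^ℓ = ∂^{ℓ₁+⋯+ℓₙ}/∂z₁^{ℓ₁}⋯∂zₙ^{ℓₙ}`. -/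
def Dml {n : ℕ} (ℓ : Fin n → ℕ) (f : (Fin n → ℂ) → ℂ) : (Fin n → ℂ) → ℂ :=
  (List.finRange n).foldr (fun i g => (pd i)^[ℓ i] g) f

/-- Partial sums `S_λ` of a Taylor-type series around `ζ`, with coefficients computed from a
given family `g` of (extended) partial derivatives: the coefficient of the monomial
`(z-ζ)^{N_j}` is `g (N_j) ζ / (N_{j,1}! ⋯ N_{j,n}!)`. -/
def pSumExt {n : ℕ} (Nj : ℕ → Fin n → ℕ) (g : (Fin n → ℕ) → (Fin n → ℂ) → ℂ)
    (ζ : Fin n → ℂ) (lam : ℕ) : (Fin n → ℂ) → ℂ :=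
  fun z => ∑ j ∈ Finset.range (lam + 1),
    (((∏ i, Nat.factorial (Nj j i) : ℕ) : ℂ))⁻¹ * g (Nj j) ζ * ∏ i, (z i - ζ i) ^ (Nj j i)

/-- Partial sums `S_λ(f,ζ)` of the Taylor development of `f` around `ζ`. -/
def pSum {n : ℕ} (Nj : ℕ → Fin n → ℕ) (f : (Fin n → ℂ) → ℂ)
    (ζ : Fin n → ℂ) (lam : ℕ) : (Fin n → ℂ) → ℂ :=
  pSumExt Nj (fun ℓ => Dml ℓ f) ζ lam

/-- The space `O(Ω)` of holomorphic functions on `Ω`. -/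
def Ospace (n : ℕ) (Ω : Set (Fin n → ℂ)) : Type :=
  {f : (Fin n → ℂ) → ℂ // DifferentiableOn ℂ f Ω}

/-- Topology of uniform convergence on compact subsets of `Ω` on `O(Ω)` (the compact-open
topology induced via restriction to `Ω`). -/
instance (n : ℕ) (Ω : Set (Fin n → ℂ)) : TopologicalSpace (Ospace n Ω) :=
  TopologicalSpace.induced
    (fun f : Ospace n Ω =>
      (⟨Ω.restrict f.1, continuousOn_iff_continuous_restrict.mp f.2.continuousOn⟩ : C(Ω, ℂ)))
    inferInstance

/-- Membership in `A^∞(Ω)`: `f` is holomorphic on `Ω` and each partial derivative `D^ℓ f`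
extends continuously to the closure of `Ω`. -/
def AinfMem (n : ℕ) (Ω : Set (Fin n → ℂ)) (f : (Fin n → ℂ) → ℂ) : Prop :=
  DifferentiableOn ℂ f Ω ∧
    ∀ ℓ : Fin n → ℕ, ∃ g : (Fin n → ℂ) → ℂ,
      ContinuousOn g (closure Ω) ∧ Set.EqOn g (Dml ℓ f) Ω

/-- The space `A^∞(Ω)`. -/
def AinfSpace (n : ℕ) (Ω : Set (Fin n → ℂ)) : Type :=
  {f : (Fin n → ℂ) → ℂ // AinfMem n Ω f}

/-- The chosen continuous extension of `D^ℓ f` to the closure of `Ω`, for `f ∈ A^∞(Ω)`.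
(Its restriction to the closure of `Ω` is uniquely determined.) -/
def AinfExt {n : ℕ} {Ω : Set (Fin n → ℂ)} (f : AinfSpace n Ω) (ℓ : Fin n → ℕ) :
    (Fin n → ℂ) → ℂ :=
  Classical.choose (f.2.2 ℓ)

lemma AinfExt_continuousOn {n : ℕ} {Ω : Set (Fin n → ℂ)} (f : AinfSpace n Ω) (ℓ : Fin n → ℕ) :
    ContinuousOn (AinfExt f ℓ) (closure Ω) :=
  (Classical.choose_spec (f.2.2 ℓ)).1

lemma AinfExt_eqOn {n : ℕ} {Ω : Set (Fin n → ℂ)} (f : AinfSpace n Ω) (ℓ : Fin n → ℕ) :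
    Set.EqOn (AinfExt f ℓ) (Dml ℓ f.1) Ω :=
  (Classical.choose_spec (f.2.2 ℓ)).2

/-- Topology on `A^∞(Ω)`: uniform convergence of every partial derivative on every compact
subset of the closure of `Ω`. -/
instance (n : ℕ) (Ω : Set (Fin n → ℂ)) : TopologicalSpace (AinfSpace n Ω) :=
  TopologicalSpace.induced
    (fun f : AinfSpace n Ω => fun ℓ : Fin n → ℕ =>
      (⟨(closure Ω).restrict (AinfExt f ℓ),
        continuousOn_iff_continuous_restrict.mp (AinfExt_continuousOn f ℓ)⟩ :
          C(closure Ω, ℂ)))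
    inferInstance

/-- A smooth compact curve in `ℂⁿ`: the image of an injective `C^∞` map with
nowhere-vanishing derivative, defined on a compact interval (an arc) or on the
circle (a closed curve, modelled by a 1-periodic map). -/
def IsSmoothCompactCurve {n : ℕ} (K : Set (Fin n → ℂ)) : Prop :=
  ∃ γ : ℝ → (Fin n → ℂ), ContDiff ℝ (⊤ : ℕ∞) γ ∧ (∀ t, deriv γ t ≠ 0) ∧ K = γ '' Set.Icc 0 1 ∧
    (Set.InjOn γ (Set.Icc 0 1) ∨ (Function.Periodic γ 1 ∧ Set.InjOn γ (Set.Ico 0 1)))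

/-- A disjoint union of finitely many smooth compact curves. -/
def IsFiniteUnionOfSmoothCurves {n : ℕ} (K : Set (Fin n → ℂ)) : Prop :=
  ∃ (m : ℕ) (C : Fin m → Set (Fin n → ℂ)),
    (∀ i, IsSmoothCompactCurve (C i)) ∧ Pairwise (Function.onFun Disjoint C) ∧ K = ⋃ i, C i


/-!
A compact set `L ⊆ Ω₁ ∪ Ω₂` carries the uniform algebra `P(L)`, the closure of the polynomials in
`C(L, ℂ)`, and the claim is that `f` restricts to an element of `P(L)`. Any closed subalgebra `A`
of `C(X, ℂ)`, with `X` compact, has a holomorphic functional calculus: if the map `h : X → ℂⁿ` has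
coordinates in `A` and takes values in an open set `Ω` star-convex about `a`, then `f ∘ h ∈ A` for
`f` holomorphic on `Ω`. Indeed `s ↦ f (a + s (h - a))` is a holomorphic family in `C(X, ℂ)` near
`[0, 1]`; for small `s` it lies in `A` by power series expansion, so its image in the Banach space
`C(X, ℂ) ⧸ A` vanishes near `0`, hence also at `s = 1`.

A Hahn–Banach separation of `Ω₁` from `Ω₂` is an affine polynomial `W` whose real part is negative
on `Ω₁` and positive on `Ω₂`. Applied to `W²`, which avoids the negative real axis, the functional
calculus puts `W / √(W²)` into `P(L)`, and with it the indicator function of `L ∩ Ω₂`. This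
idempotent reduces the claim to `Ω₁` and `Ω₂` separately, and both are star-convex.
-/

section WeakHolomorphy

variable {E F κ : Type*} [NormedAddCommGroup E] [NormedSpace ℂ E] [CompleteSpace E]
  [NormedAddCommGroup F] [NormedSpace ℂ F] [CompleteSpace F]

lemma map_circleIntegral (φ : E →L[ℂ] F) {G : ℂ → E} {c : ℂ} {R : ℝ}
    (hG : CircleIntegrable G c R) :
    φ (∮ z in C(c, R), G z) = ∮ z in C(c, R), φ (G z) := by
  simp only [circleIntegral, ← map_smul]
  exact (φ.intervalIntegral_comp_comm hG.out).symm

theorem differentiableOn_of_separating_clm_comp (φ : κ → E →L[ℂ] F)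
    (hφ : Function.Injective fun x k => φ k x) {U : Set ℂ} (hU : IsOpen U) {G : ℂ → E}
    (hG : ContinuousOn G U) (hφG : ∀ k, DifferentiableOn ℂ (fun z => φ k (G z)) U) :
    DifferentiableOn ℂ G U := by
  intro c hc
  obtain ⟨R, hR, hRU⟩ := Metric.nhds_basis_closedBall.mem_iff.1 (hU.mem_nhds hc)
  lift R to NNReal using hR.le
  have hGR : ContinuousOn G (Metric.sphere c R) :=
    hG.mono (Metric.sphere_subset_closedBall.trans hRU)
  have hcauchy := (hasFPowerSeriesOn_cauchy_integral (hGR.circleIntegrable R.coe_nonneg)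
    hR).differentiableOn
  rw [Metric.eball_coe] at hcauchy
  refine ((hcauchy.congr fun w hw => hφ (funext fun k => ?_)).differentiableAt
    (Metric.ball_mem_nhds c hR)).differentiableWithinAt
  have hint : CircleIntegrable (fun z => (z - w)⁻¹ • G z) c R := by
    refine ContinuousOn.circleIntegrable R.coe_nonneg (ContinuousOn.smul ?_ hGR)
    refine (continuousOn_id.sub continuousOn_const).inv₀ fun z hz => sub_ne_zero.2 ?_
    rintro rfl
    exact (Metric.mem_ball.1 hw).ne hz
  calc φ k (G w)
      = (2 * Real.pi * Complex.I : ℂ)⁻¹ • ∮ z in C(c, R), (z - w)⁻¹ • φ k (G z) :=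
        ((((hφG k).mono hRU).mono Metric.closure_ball_subset_closedBall).diffContOnCl
          |>.two_pi_i_inv_smul_circleIntegral_sub_inv_smul hw).symm
    _ = φ k ((2 * Real.pi * Complex.I : ℂ)⁻¹ • ∮ z in C(c, R), (z - w)⁻¹ • G z) := by
        simp only [map_smul, map_circleIntegral _ hint]

theorem differentiableOn_of_differentiableOn_apply {X : Type*} [TopologicalSpace X] [CompactSpace X]
    {U : Set ℂ} (hU : IsOpen U) {G : ℂ → C(X, ℂ)} (hG : ContinuousOn G U)
    (hGx : ∀ x, DifferentiableOn ℂ (fun z => G z x) U) : DifferentiableOn ℂ G U :=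
  differentiableOn_of_separating_clm_comp
    (fun x => ContinuousMap.evalCLM ℂ x) (fun _ _ h => ContinuousMap.ext (congrFun h)) hU hG hGx

end WeakHolomorphy

section Quotient

variable {𝕜 V E : Type*} [NontriviallyNormedField 𝕜] [NormedAddCommGroup V] [NormedSpace 𝕜 V]
  [NormedAddCommGroup E] [NormedSpace 𝕜 E] {S : Submodule 𝕜 E}

theorem powerSeries_coeff_mem_of_eventually_mem (hS : IsClosed (S : Set E)) {g : 𝕜 → E}
    {p : FormalMultilinearSeries 𝕜 𝕜 E} {c : 𝕜} (hp : HasFPowerSeriesAt g p c)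
    (hg : ∀ᶠ z in 𝓝 c, g z ∈ S) (k : ℕ) : p.coeff k ∈ S := by
  have : IsClosed (S : Set E) := hS
  obtain ⟨r, hr⟩ := hp
  have hq : HasFPowerSeriesAt (S.mkQL ∘ g) (S.mkQL.compFormalMultilinearSeries p) c :=
    ⟨r, S.mkQL.comp_hasFPowerSeriesOnBall hr⟩
  have h0 := hq.eq_zero_of_eventually
    (hg.mono fun z hz => (Submodule.Quotient.mk_eq_zero S).2 hz)
  rw [← Submodule.Quotient.mk_eq_zero S]
  exact congrArg (fun q : FormalMultilinearSeries 𝕜 𝕜 (E ⧸ S) => q.coeff k) h0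

theorem analyticOnNhd_mem_of_preconnected_of_eventually_mem (hS : IsClosed (S : Set E))
    {g : V → E} {U : Set V} (hg : AnalyticOnNhd 𝕜 g U) (hU : IsPreconnected U) {z₀ z : V}
    (hz₀ : z₀ ∈ U) (hgS : ∀ᶠ z in 𝓝 z₀, g z ∈ S) (hz : z ∈ U) : g z ∈ S := by
  have : IsClosed (S : Set E) := hS
  exact (Submodule.Quotient.mk_eq_zero S).1 <|
    (S.mkQL.comp_analyticOnNhd hg).eqOn_zero_of_preconnected_of_eventuallyEq_zero hU hz₀
      (hgS.mono fun z hz => (Submodule.Quotient.mk_eq_zero S).2 hz) hz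

end Quotient

section ClosedSubalgebra

variable {X : Type*} [TopologicalSpace X] [CompactSpace X] {A : Subalgebra ℂ C(X, ℂ)}

theorem mem_of_eq_diagonal (hA : IsClosed (A : Set C(X, ℂ))) {g : ℂ → C(X, ℂ)} {c : ℂ} {R : ℝ}
    (hg : DifferentiableOn ℂ g (Metric.ball c R)) (hgA : ∀ w ∈ Metric.ball c R, g w ∈ A)
    {u F : C(X, ℂ)} (hu : u ∈ A) (huR : u ∈ Metric.ball (algebraMap ℂ C(X, ℂ) c) R)
    (hF : ∀ x, F x = g (u x) x) : F ∈ A := by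
  rcases isEmpty_or_nonempty X with _ | _
  · exact Subsingleton.elim 0 F ▸ A.zero_mem
  obtain ⟨ρ, huρ, hρR⟩ := exists_between (mem_ball_iff_norm.1 huR)
  lift ρ to NNReal using (norm_nonneg _).trans huρ.le
  set v : C(X, ℂ) := u - algebraMap ℂ C(X, ℂ) c
  have hρ : 0 < ρ := NNReal.coe_pos.1 ((norm_nonneg v).trans_lt huρ)
  have hp := (hg.mono (Metric.closedBall_subset_ball hρR)).hasFPowerSeriesOnBall hρ
  set p := cauchyPowerSeries g c ρ
  have hpA : ∀ k, p.coeff k ∈ A :=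
    powerSeries_coeff_mem_of_eventually_mem (S := Subalgebra.toSubmodule A) hA hp.hasFPowerSeriesAt
      (eventually_of_mem (Metric.ball_mem_nhds c ((NNReal.coe_pos.2 hρ).trans hρR)) hgA)
  have hsum : Summable fun k => p.coeff k * v ^ k := by
    refine Summable.of_norm_bounded (p.summable_norm_mul_pow (r := ‖v‖₊) ?_) fun k => ?_
    · exact lt_of_lt_of_le (ENNReal.coe_lt_coe.2 huρ) hp.r_le
    · rw [p.norm_apply_eq_norm_coef]
      exact (norm_mul_le _ _).trans (by gcongr; exact norm_pow_le _ _)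
  have hFsum : F = ∑' k, p.coeff k * v ^ k := by
    ext x
    have hxρ : ‖v x‖ < ρ := (v.norm_coe_le_norm x).trans_lt huρ
    have hgx := (hp.hasSum (y := v x) (by simpa [enorm_eq_nnnorm] using hxρ)).mapL
      (ContinuousMap.evalCLM ℂ x)
    have hsx := hsum.hasSum.mapL (ContinuousMap.evalCLM ℂ x)
    have hcv : c + v x = u x := by simp [v]
    rw [hF, ← hcv]
    refine hgx.unique ?_
    simpa [mul_comm] using hsx
  have hvA : v ∈ A := sub_mem hu (A.algebraMap_mem c)
  rw [hFsum]
  exact tsum_mem hA fun k => mul_mem (hpA k) (pow_mem hvA k)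

lemma isOpen_setOf_forall_mem {Y Z : Type*} [TopologicalSpace Y] [TopologicalSpace Z]
    {γ : Y → X → Z} (hγ : Continuous (Function.uncurry γ)) {Ω : Set Z} (hΩ : IsOpen Ω) :
    IsOpen {s | ∀ x, γ s x ∈ Ω} := by
  refine isOpen_iff_eventually.2 fun s hs => ?_
  simpa using isCompact_univ.eventually_forall_of_forall_eventually (P := fun s x => γ s x ∈ Ω)
    fun x _ => hγ.continuousAt.eventually (hΩ.mem_nhds (hs x))

theorem exists_differentiableOn_apply_eq_comp {V : Type*} [NormedAddCommGroup V]
    [NormedSpace ℂ V] {f : V → ℂ} {Ω : Set V} (hΩ : IsOpen Ω) (hf : DifferentiableOn ℂ f Ω)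
    {γ : ℂ → X → V} (hγ : Continuous (Function.uncurry γ))
    (hγx : ∀ x, Differentiable ℂ fun s => γ s x) :
    ∃ G : ℂ → C(X, ℂ), DifferentiableOn ℂ G {s | ∀ x, γ s x ∈ Ω} ∧
      ∀ s, (∀ x, γ s x ∈ Ω) → ∀ x, G s x = f (γ s x) := by
  have hG : ∀ s, (∀ x, γ s x ∈ Ω) → ∀ x,
      ContinuousMap.mkD (fun x => f (γ s x)) 0 x = f (γ s x) := fun s hs x =>
    ContinuousMap.mkD_apply_of_continuous <|
      hf.continuousOn.comp_continuous (hγ.comp (Continuous.prodMk_right s)) hs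
  refine ⟨_, differentiableOn_of_differentiableOn_apply (isOpen_setOf_forall_mem hγ hΩ)
    (ContinuousMap.continuousOn_mkD_of_uncurry _ _ ?_) fun x => ?_, hG⟩
  · exact hf.continuousOn.comp hγ.continuousOn fun q hq => hq.1 q.2
  · exact (hf.comp (hγx x).differentiableOn fun s (hs : ∀ x, γ s x ∈ Ω) => hs x).congr
      fun s hs => hG s hs x

lemma continuous_uncurry_piecewise_update {ι Y Z : Type*} [DecidableEq ι] [TopologicalSpace Y]
    [TopologicalSpace Z] (T : Finset ι) {u : Y → ι → Z} (hu : Continuous u) (b : ι → Z) (j : ι) :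
    Continuous (Function.uncurry fun w y => T.piecewise (u y) (Function.update b j w)) := by
  refine continuous_pi fun i => ?_
  by_cases hi : i ∈ T
  · simp only [Function.uncurry_def, T.piecewise_eq_of_mem _ _ hi]
    fun_prop
  · simp only [Function.uncurry_def, T.piecewise_eq_of_notMem _ _ hi]
    fun_prop

lemma differentiable_piecewise_update {𝕜 ι : Type*} [NontriviallyNormedField 𝕜] [DecidableEq ι]
    (T : Finset ι) (u b : ι → 𝕜) (j : ι) :
    Differentiable 𝕜 fun w => T.piecewise u (Function.update b j w) := by
  refine differentiable_pi.2 fun i => ?_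
  by_cases hi : i ∈ T
  · simp only [T.piecewise_eq_of_mem _ _ hi]
    fun_prop
  · simp only [T.piecewise_eq_of_notMem _ _ hi]
    exact fun w => differentiableAt_pi.1 (hasFDerivAt_update b w).differentiableAt i

variable {ι : Type*} {h : ι → C(X, ℂ)} {f : (ι → ℂ) → ℂ} {a : ι → ℂ} {F : C(X, ℂ)}

lemma mem_of_eq_comp_piecewise [Fintype ι] [DecidableEq ι]
    (hA : IsClosed (A : Set C(X, ℂ))) (hh : ∀ i, h i ∈ A) {R : ℝ} (hR : 0 < R)
    (hf : DifferentiableOn ℂ f (Metric.ball a R))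
    (hhR : ∀ x, (fun i => h i x) ∈ Metric.ball a R) (T : Finset ι) {b : ι → ℂ}
    (hb : b ∈ Metric.ball a R) (hF : ∀ x, F x = f (T.piecewise (fun i => h i x) b)) :
    F ∈ A := by
  -- Outside `T` the coordinates are frozen at `b`; `h j` is then substituted for the frozen `b j`
  -- by expanding in powers of `h j - a j`.
  induction T using Finset.induction_on generalizing b F with
  | empty =>
    have hconst : F = algebraMap ℂ C(X, ℂ) (f b) := by
      ext x
      simpa using hF x
    exact hconst ▸ A.algebraMap_mem _
  | insert j T hj ih =>
    have hball := ball_pi a hR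
    set γ : ℂ → X → ι → ℂ := fun w x => T.piecewise (fun i => h i x) (Function.update b j w)
    have hγ : Continuous (Function.uncurry γ) :=
      continuous_uncurry_piecewise_update T (continuous_pi fun i => (h i).continuous) b j
    have hγx : ∀ x, Differentiable ℂ fun w => γ w x := fun x =>
      differentiable_piecewise_update T (fun i => h i x) b j
    have hup : ∀ w ∈ Metric.ball (a j) R, Function.update b j w ∈ Metric.ball a R := by
      rw [hball] at hb ⊢
      exact fun w hw => (update_mem_pi_iff_of_mem hb).2 fun _ => hw
    have hγR : ∀ w ∈ Metric.ball (a j) R, ∀ x, γ w x ∈ Metric.ball a R := by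
      rw [hball] at hhR hup ⊢
      exact fun w hw x => T.piecewise_mem_set_pi (hhR x) (hup w hw)
    obtain ⟨g, hg, hgx⟩ := exists_differentiableOn_apply_eq_comp Metric.isOpen_ball hf hγ hγx
    have hgA : ∀ w ∈ Metric.ball (a j) R, g w ∈ A := fun w hw =>
      ih (hup w hw) (hgx w (hγR w hw))
    have hjR : ∀ x, h j x ∈ Metric.ball (a j) R := fun x => (hball ▸ hhR x) j (mem_univ j)
    refine mem_of_eq_diagonal hA (hg.mono hγR) hgA (hh j) ((ContinuousMap.dist_lt_iff hR).2 hjR)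
      fun x => ?_
    rw [hgx _ (hγR _ (hjR x)), hF, T.piecewise_insert, Finset.update_piecewise_of_notMem _ _ _ hj]

theorem mem_of_eq_comp_of_forall_mem_ball [Fintype ι] (hA : IsClosed (A : Set C(X, ℂ)))
    (hh : ∀ i, h i ∈ A) {R : ℝ} (hR : 0 < R) (hf : DifferentiableOn ℂ f (Metric.ball a R))
    (hhR : ∀ x, (fun i => h i x) ∈ Metric.ball a R) (hF : ∀ x, F x = f fun i => h i x) :
    F ∈ A := by
  classical
  exact mem_of_eq_comp_piecewise hA hh hR hf hhR Finset.univ (Metric.mem_ball_self hR)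
    fun x => by rw [Finset.piecewise_univ, hF]

theorem mem_of_eq_comp_of_isPreconnected [Finite ι] (hA : IsClosed (A : Set C(X, ℂ)))
    {k : ℂ → ι → C(X, ℂ)} (hk : Differentiable ℂ k) (hkA : ∀ s i, k s i ∈ A) {s₀ : ℂ}
    (hks₀ : ∀ i, k s₀ i = algebraMap ℂ C(X, ℂ) (a i)) {Ω : Set (ι → ℂ)} (hΩ : IsOpen Ω)
    (hf : DifferentiableOn ℂ f Ω) {S : Set ℂ} (hS : IsPreconnected S) (hs₀ : s₀ ∈ S)
    (hkΩ : ∀ s ∈ S, ∀ x, (fun i => k s i x) ∈ Ω) {s : ℂ} (hs : s ∈ S)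
    (hF : ∀ x, F x = f fun i => k s i x) : F ∈ A := by
  cases nonempty_fintype ι
  rcases isEmpty_or_nonempty X with _ | ⟨⟨x₀⟩⟩
  · exact Subsingleton.elim 0 F ▸ A.zero_mem
  set γ : ℂ → X → ι → ℂ := fun s x i => k s i x
  have hγ : Continuous (Function.uncurry γ) := by
    have := hk.continuous
    simp only [γ, Function.uncurry_def]
    fun_prop
  have hγx : ∀ x, Differentiable ℂ fun s => γ s x := fun x => differentiable_pi.2 fun i =>
    (ContinuousMap.evalCLM ℂ x : C(X, ℂ) →L[ℂ] ℂ).differentiable.comp (differentiable_pi.1 hk i)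
  have hγs₀ : ∀ x, γ s₀ x = a := fun x => funext fun i => by simp [γ, hks₀]
  obtain ⟨G, hG, hGx⟩ := exists_differentiableOn_apply_eq_comp hΩ hf hγ hγx
  have hnear : ∀ᶠ s in 𝓝 s₀, G s ∈ A := by
    obtain ⟨r, hr, hrΩ⟩ := Metric.isOpen_iff.1 hΩ a (hγs₀ x₀ ▸ hkΩ s₀ hs₀ x₀)
    have hball : ∀ᶠ s in 𝓝 s₀, ∀ x, γ s x ∈ Metric.ball a r :=
      (isOpen_setOf_forall_mem hγ Metric.isOpen_ball).mem_nhds fun x =>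
        hγs₀ x ▸ Metric.mem_ball_self hr
    exact hball.mono fun s hs => mem_of_eq_comp_of_forall_mem_ball hA (hkA s) hr
      (hf.mono hrΩ) hs (hGx s fun x => hrΩ (hs x))
  have hGs : G s ∈ A := analyticOnNhd_mem_of_preconnected_of_eventually_mem
    (S := Subalgebra.toSubmodule A) hA ((hG.analyticOnNhd (isOpen_setOf_forall_mem hγ hΩ)).mono hkΩ)
    hS hs₀ hnear hs
  have hFG : F = G s := ContinuousMap.ext fun x => by rw [hF, hGx s (hkΩ s hs)]
  exact hFG ▸ hGs

theorem mem_of_eq_comp_of_starConvex [Finite ι] (hA : IsClosed (A : Set C(X, ℂ)))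
    (hh : ∀ i, h i ∈ A) {Ω : Set (ι → ℂ)} (hΩ : IsOpen Ω) (hstar : StarConvex ℝ a Ω)
    (hf : DifferentiableOn ℂ f Ω) (hhΩ : ∀ x, (fun i => h i x) ∈ Ω)
    (hF : ∀ x, F x = f fun i => h i x) : F ∈ A := by
  cases nonempty_fintype ι
  set α : ι → C(X, ℂ) := fun i => algebraMap ℂ C(X, ℂ) (a i)
  have hαA : ∀ i, α i ∈ A := fun i => A.algebraMap_mem (a i)
  refine mem_of_eq_comp_of_isPreconnected hA (a := a) (k := fun s => α + s • (h - α)) (by fun_prop)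
    (fun s i => add_mem (hαA i) (A.smul_mem (sub_mem (hh i) (hαA i)) s))
    (s₀ := 0) (fun i => by simp [α]) hΩ hf
    (isPreconnected_Icc.image _ Complex.continuous_ofReal.continuousOn)
    ⟨0, left_mem_Icc.2 zero_le_one, Complex.ofReal_zero⟩ ?_
    ⟨1, right_mem_Icc.2 zero_le_one, Complex.ofReal_one⟩ fun x => by simp [hF]
  rintro _ ⟨t, ht, rfl⟩ x
  convert hstar.add_smul_sub_mem (hhΩ x) ht.1 ht.2 using 1
  ext i
  simp [α]

end ClosedSubalgebra

section Idempotents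

variable {X : Type*} [TopologicalSpace X] [CompactSpace X] {A : Subalgebra ℂ C(X, ℂ)}

theorem mem_of_eq_comp_of_starConvex_complex (hA : IsClosed (A : Set C(X, ℂ)))
    {g : C(X, ℂ)} (hg : g ∈ A) {a : ℂ} {Ω : Set ℂ} (hΩ : IsOpen Ω) (hstar : StarConvex ℝ a Ω)
    {f : ℂ → ℂ} (hf : DifferentiableOn ℂ f Ω) (hgΩ : ∀ x, g x ∈ Ω) {F : C(X, ℂ)}
    (hF : ∀ x, F x = f (g x)) : F ∈ A :=
  mem_of_eq_comp_of_starConvex (h := fun _ : Unit => g) hA (fun _ => hg)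
    (hΩ.preimage (continuous_apply ()))
    (StarConvex.linear_preimage (x := fun _ : Unit => a) (LinearMap.proj (R := ℝ) ()) hstar)
    (hf.comp (differentiable_apply ()).differentiableOn fun _ hz => hz) hgΩ hF

lemma sq_mem_slitPlane_of_re_ne_zero {z : ℂ} (hz : z.re ≠ 0) : z ^ 2 ∈ Complex.slitPlane := by
  rw [Complex.mem_slitPlane_iff, sq, Complex.mul_re, Complex.mul_im]
  by_cases him : z.im = 0
  · exact Or.inl (by simpa [him] using hz)
  · exact Or.inr (by simpa [mul_comm z.im, ← two_mul] using ⟨hz, him⟩)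

theorem exists_idempotent_mem_of_re_ne_zero (hA : IsClosed (A : Set C(X, ℂ))) {w : C(X, ℂ)}
    (hw : w ∈ A) (hre : ∀ x, (w x).re ≠ 0) :
    ∃ e ∈ A, (∀ x, (w x).re < 0 → e x = 0) ∧ ∀ x, 0 < (w x).re → e x = 1 := by
  have hslit : ∀ x, w x ^ 2 ∈ Complex.slitPlane := fun x => sq_mem_slitPlane_of_re_ne_zero (hre x)
  have hw0 : ∀ x, w x ≠ 0 := fun x hx => hre x (by simp [hx])
  have hsqrt : DifferentiableOn ℂ (fun z : ℂ => (z ^ (2⁻¹ : ℂ))⁻¹) Complex.slitPlane :=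
    fun z hz => ((differentiableAt_id.cpow_const hz).inv
      (by simp [Complex.slitPlane_ne_zero hz])).differentiableWithinAt
  -- The sign of `Re w` is `w / √(w²)`.
  let r : C(X, ℂ) := ⟨fun x => ((w x ^ 2) ^ (2⁻¹ : ℂ))⁻¹,
    hsqrt.continuousOn.comp_continuous (by fun_prop) hslit⟩
  have hr : r ∈ A := mem_of_eq_comp_of_starConvex_complex hA (pow_mem hw 2)
    Complex.isOpen_slitPlane Complex.starConvex_one_slitPlane hsqrt hslit fun _ => rfl
  refine ⟨(2⁻¹ : ℂ) • (1 + w * r), A.smul_mem (add_mem (one_mem A) (mul_mem hw hr)) _,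
    fun x hneg => ?_, fun x hpos => ?_⟩
  · have hrx : r x = (-w x)⁻¹ := by
      simp only [r, ContinuousMap.coe_mk]
      rw [← neg_sq, Complex.sq_cpow_two_inv (by simpa using hneg)]
    simp [hrx, hw0 x]
  · have hrx : r x = (w x)⁻¹ := by
      simp only [r, ContinuousMap.coe_mk]
      rw [Complex.sq_cpow_two_inv hpos]
    change (2⁻¹ : ℂ) * (1 + w x * r x) = 1
    rw [hrx, mul_inv_cancel₀ (hw0 x)]
    norm_num

theorem mul_mem_of_idempotent {ι : Type*} [Finite ι] (hA : IsClosed (A : Set C(X, ℂ)))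
    {h : ι → C(X, ℂ)} (hh : ∀ i, h i ∈ A) {Ω : Set (ι → ℂ)} (hΩ : IsOpen Ω) {a : ι → ℂ}
    (hstar : StarConvex ℝ a Ω) {f : (ι → ℂ) → ℂ} (hf : DifferentiableOn ℂ f Ω)
    {e : C(X, ℂ)} (he : e ∈ A) (hΩe : ∀ x, e x = 0 ∨ e x = 1 ∧ (fun i => h i x) ∈ Ω)
    {F : C(X, ℂ)} (hF : ∀ x, e x = 1 → F x = f fun i => h i x) : e * F ∈ A := by
  by_cases haΩ : a ∈ Ω
  · -- Sending `{e = 0}` to the star centre yields coordinates with values in `Ω` on all of `X`.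
    set k : ι → C(X, ℂ) := fun i => e * h i + (1 - e) * algebraMap ℂ C(X, ℂ) (a i)
    have hkA : ∀ i, k i ∈ A := fun i =>
      add_mem (mul_mem he (hh i)) (mul_mem (sub_mem (one_mem A) he) (A.algebraMap_mem _))
    have hk0 : ∀ x, e x = 0 → (fun i => k i x) = a := fun x hx => by simp [k, hx]
    have hk1 : ∀ x, e x = 1 → (fun i => k i x) = fun i => h i x := fun x hx => by simp [k, hx]
    have hkΩ : ∀ x, (fun i => k i x) ∈ Ω := fun x =>
      (hΩe x).elim (fun hx => hk0 x hx ▸ haΩ) fun hx => hk1 x hx.1 ▸ hx.2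
    let F' : C(X, ℂ) := ⟨_, hf.continuousOn.comp_continuous (by fun_prop) hkΩ⟩
    have hF' : F' ∈ A := mem_of_eq_comp_of_starConvex hA hkA hΩ hstar hf hkΩ fun _ => rfl
    have heq : e * F = e * F' := by
      ext x
      rcases hΩe x with hx | ⟨hx, -⟩
      · simp [hx]
      · simp [F', hx, hF x hx, ← hk1 x hx]
    exact heq ▸ mul_mem he hF'
  · have he0 : e = 0 := ContinuousMap.ext fun x =>
      (hΩe x).resolve_right fun hx => haΩ (hstar.mem ⟨_, hx.2⟩)
    simp [he0]

theorem mem_of_eq_comp_of_starConvex_union {ι : Type*} [Finite ι]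
    (hA : IsClosed (A : Set C(X, ℂ))) {h : ι → C(X, ℂ)} (hh : ∀ i, h i ∈ A)
    {Ω₁ Ω₂ : Set (ι → ℂ)} (hΩ₁o : IsOpen Ω₁) (hΩ₂o : IsOpen Ω₂) {a₁ a₂ : ι → ℂ}
    (hΩ₁ : StarConvex ℝ a₁ Ω₁) (hΩ₂ : StarConvex ℝ a₂ Ω₂) {f : (ι → ℂ) → ℂ}
    (hf₁ : DifferentiableOn ℂ f Ω₁) (hf₂ : DifferentiableOn ℂ f Ω₂) {w : C(X, ℂ)} (hw : w ∈ A)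
    (hwΩ : ∀ x, (w x).re < 0 ∧ (fun i => h i x) ∈ Ω₁ ∨ 0 < (w x).re ∧ (fun i => h i x) ∈ Ω₂)
    {F : C(X, ℂ)} (hF : ∀ x, F x = f fun i => h i x) : F ∈ A := by
  obtain ⟨e, he, he₀, he₁⟩ := exists_idempotent_mem_of_re_ne_zero hA hw fun x =>
    (hwΩ x).elim (fun hx => hx.1.ne) fun hx => hx.1.ne'
  have hF₁ : (1 - e) * F ∈ A := by
    refine mul_mem_of_idempotent hA hh hΩ₁o hΩ₁ hf₁ (sub_mem (one_mem A) he) (fun x => ?_)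
      fun x _ => hF x
    exact (hwΩ x).symm.imp (fun hx => by simp [he₁ x hx.1])
      fun hx => ⟨by simp [he₀ x hx.1], hx.2⟩
  have hF₂ : e * F ∈ A :=
    mul_mem_of_idempotent hA hh hΩ₂o hΩ₂ hf₂ he
      (fun x => (hwΩ x).imp (fun hx => he₀ x hx.1) fun hx => ⟨he₁ x hx.1, hx.2⟩) fun x _ => hF x
  rw [show F = (1 - e) * F + e * F by ring]
  exact add_mem hF₁ hF₂

end Idempotents

section PolynomialClosure

variable {ι : Type*} (K : Set (ι → ℂ))

/-- Restriction of holomorphic polynomials to `K`, as an algebra homomorphism into `C(K, ℂ)`. -/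
def polynomialRestrict : MvPolynomial ι ℂ →ₐ[ℂ] C(K, ℂ) :=
  MvPolynomial.aeval fun i => ⟨fun z => z.1 i, (continuous_apply i).comp continuous_subtype_val⟩

@[simp]
lemma polynomialRestrict_apply (p : MvPolynomial ι ℂ) (z : K) :
    polynomialRestrict K p z = MvPolynomial.eval z.1 p := by
  induction p using MvPolynomial.induction_on with
  | C c => simp [polynomialRestrict]
  | add p q hp hq => simp [hp, hq]
  | mul_X p i hp =>
    rw [map_mul, map_mul, ContinuousMap.mul_apply, hp]
    simp [polynomialRestrict]

variable [CompactSpace K]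

/-- The uniform algebra `P(K)`: the closure in `C(K, ℂ)` of the restrictions to `K` of the
holomorphic polynomials. -/
def polynomialClosure : Subalgebra ℂ C(K, ℂ) :=
  (polynomialRestrict K).range.topologicalClosure

lemma isClosed_polynomialClosure : IsClosed (polynomialClosure K : Set C(K, ℂ)) :=
  Subalgebra.isClosed_topologicalClosure _

lemma polynomialRestrict_mem_polynomialClosure (p : MvPolynomial ι ℂ) :
    polynomialRestrict K p ∈ polynomialClosure K :=
  Subalgebra.le_topologicalClosure _ ⟨p, rfl⟩

variable {K}

lemma exists_norm_sub_eval_lt {F : C(K, ℂ)} (hF : F ∈ polynomialClosure K)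
    {ε : ℝ} (hε : 0 < ε) :
    ∃ Q : MvPolynomial ι ℂ, ∀ z : K, ‖F z - MvPolynomial.eval z.1 Q‖ < ε := by
  obtain ⟨_, ⟨Q, rfl⟩, hQ⟩ := Metric.mem_closure_iff.1 hF ε hε
  refine ⟨Q, fun z => ?_⟩
  rw [← polynomialRestrict_apply, ← dist_eq_norm]
  exact (ContinuousMap.dist_lt_iff hε).1 hQ z

end PolynomialClosure

section Separation

variable {ι : Type*} [Finite ι] {Ω₁ Ω₂ : Set (ι → ℂ)}

lemma exists_polynomial_eval_eq (T : (ι → ℂ) →ₗ[ℂ] ℂ) :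
    ∃ p : MvPolynomial ι ℂ, ∀ z, MvPolynomial.eval z p = T z := by
  classical
  cases nonempty_fintype ι
  refine ⟨∑ i, MvPolynomial.C (T fun j => if i = j then 1 else 0) * MvPolynomial.X i, fun z => ?_⟩
  simp [T.pi_apply_eq_sum_univ z, mul_comm]

lemma exists_polynomial_separating (hΩ₁o : IsOpen Ω₁) (hΩ₁ : Convex ℝ Ω₁) (hΩ₂o : IsOpen Ω₂)
    (hΩ₂ : Convex ℝ Ω₂) (hdisj : Disjoint Ω₁ Ω₂) :
    ∃ W : MvPolynomial ι ℂ, (∀ z ∈ Ω₁, (MvPolynomial.eval z W).re < 0) ∧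
      ∀ z ∈ Ω₂, 0 < (MvPolynomial.eval z W).re := by
  obtain ⟨T, u, hT₁, hT₂⟩ :=
    RCLike.geometric_hahn_banach_open_open (𝕜 := ℂ) hΩ₁ hΩ₁o hΩ₂ hΩ₂o hdisj
  obtain ⟨p, hp⟩ := exists_polynomial_eval_eq (T : (ι → ℂ) →ₗ[ℂ] ℂ)
  refine ⟨p - MvPolynomial.C (u : ℂ), fun z hz => ?_, fun z hz => ?_⟩
  · simpa [hp] using hT₁ z hz
  · simpa [hp] using hT₂ z hz

end Separation

lemma exists_starConvex {E : Type*} [AddCommGroup E] [Module ℝ E] {s : Set E}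
    (hs : Convex ℝ s) : ∃ a, StarConvex ℝ a s := by
  rcases s.eq_empty_or_nonempty with rfl | ⟨a, ha⟩
  · exact ⟨0, starConvex_empty 0⟩
  · exact ⟨a, hs.starConvex ha⟩

theorem runge_union_two_open_convex_general {ι : Type*} [Finite ι] {Ω₁ Ω₂ : Set (ι → ℂ)}
    (hΩ₁o : IsOpen Ω₁) (hΩ₁ : ∃ a, StarConvex ℝ a Ω₁)
    (hΩ₂o : IsOpen Ω₂) (hΩ₂ : ∃ a, StarConvex ℝ a Ω₂)
    (hsep : ∃ W : MvPolynomial ι ℂ, (∀ z ∈ Ω₁, (MvPolynomial.eval z W).re < 0) ∧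
      ∀ z ∈ Ω₂, 0 < (MvPolynomial.eval z W).re)
    {f : (ι → ℂ) → ℂ} (hf : DifferentiableOn ℂ f (Ω₁ ∪ Ω₂)) {L : Set (ι → ℂ)}
    (hL : IsCompact L) (hLΩ : L ⊆ Ω₁ ∪ Ω₂) {ε : ℝ} (hε : 0 < ε) :
    ∃ Q : MvPolynomial ι ℂ, ∀ z ∈ L, ‖f z - MvPolynomial.eval z Q‖ < ε := by
  obtain ⟨a₁, hΩ₁⟩ := hΩ₁
  obtain ⟨a₂, hΩ₂⟩ := hΩ₂
  obtain ⟨W, hW₁, hW₂⟩ := hsep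
  have : CompactSpace L := isCompact_iff_compactSpace.1 hL
  let F : C(L, ℂ) := ⟨fun z => f z, (hf.continuousOn.mono hLΩ).domRestrict⟩
  have hF : F ∈ polynomialClosure L := by
    refine mem_of_eq_comp_of_starConvex_union (isClosed_polynomialClosure L)
      (fun i => polynomialRestrict_mem_polynomialClosure L (MvPolynomial.X i)) hΩ₁o hΩ₂o hΩ₁ hΩ₂
      (hf.mono subset_union_left) (hf.mono subset_union_right)
      (polynomialRestrict_mem_polynomialClosure L W) (fun z => ?_) fun z => ?_
    · simpa using (hLΩ z.2).imp (fun hz => ⟨hW₁ z hz, hz⟩) fun hz => ⟨hW₂ z hz, hz⟩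
    · exact congrArg f (funext fun i => by simp)
  obtain ⟨Q, hQ⟩ := exists_norm_sub_eval_lt hF hε
  exact ⟨Q, fun z hz => hQ ⟨z, hz⟩⟩

/-- the union of two disjoint open convex sets is a Runge domain. -/
theorem runge_union_two_open_convex (n : ℕ) (Ω₁ Ω₂ : Set (Fin n → ℂ))
    (hΩ₁o : IsOpen Ω₁) (hΩ₁cv : Convex ℝ Ω₁)
    (hΩ₂o : IsOpen Ω₂) (hΩ₂cv : Convex ℝ Ω₂)
    (hdisj : Disjoint Ω₁ Ω₂)
    (f : (Fin n → ℂ) → ℂ) (hf : DifferentiableOn ℂ f (Ω₁ ∪ Ω₂))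
    (L : Set (Fin n → ℂ)) (hLcpt : IsCompact L) (hLsub : L ⊆ Ω₁ ∪ Ω₂)
    (ε : ℝ) (hε : 0 < ε) :
    ∃ Q : MvPolynomial (Fin n) ℂ, ∀ z ∈ L, ‖f z - mvEval Q z‖ < ε := by
  exact runge_union_two_open_convex_general hΩ₁o (exists_starConvex hΩ₁cv) hΩ₂o
    (exists_starConvex hΩ₂cv) (exists_polynomial_separating hΩ₁o hΩ₁cv hΩ₂o hΩ₂cv hdisj)
    hf hLcpt hLsub hε

end
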